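/- (Inequality in (1.18)) Let d ≥ 3. There is a constant c depending only on d such that for all N ≥ 2, all j ∈ ℤ, every nonempty subset A of C_j, and every z ∈ (ℤ/Nℤ)^d × {(j−1)N, (j+1)N}: P_z[H_A < T_{B̃_j}] ≤ c |A| / N^{d−1}. -/

import Mathlib

open MeasureTheory Filter
open scoped ENNReal Classical

namespace DiscCyl

/-- The lattice `ℤ^{d+1}`. -/
abbrev Lat (d : ℕ) := Fin (d + 1) → ℤ

/-- The discrete cylinder `E = (ℤ/Nℤ)^d × ℤ`. -/
abbrev Cyl (d N : ℕ) := (Fin d → ZMod N) × ℤ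

instance (N : ℕ) : MeasurableSpace (ZMod N) := ⊤

instance (N : ℕ) : Countable (ZMod N) := by
  cases N with
  | zero => exact inferInstanceAs (Countable ℤ)
  | succ n => exact inferInstanceAs (Countable (Fin (n + 1)))

/-- The canonical projection `π_E : ℤ^{d+1} → E`. -/
def projE (d N : ℕ) (v : Lat d) : Cyl d N :=
  (fun i => (v i.castSucc : ZMod N), v (Fin.last d))

/-- The `2(d+1)` unit vectors `±e_i` of `ℤ^{d+1}`. -/
def unitVecs (d : ℕ) : Finset (Lat d) :=
  Finset.image (fun p : Fin (d + 1) × Bool => Pi.single p.1 (if p.2 then (1 : ℤ) else -1))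
    Finset.univ

/-- One-step transition probability of simple random walk on the cylinder:
each of the `2(d+1)` unit moves of `ℤ^{d+1}` is taken with probability `1/(2(d+1))`
and projected to `E`. -/
noncomputable def stepProb (d N : ℕ) (x y : Cyl d N) : ℝ≥0∞ :=
  (((unitVecs d).filter fun e => x + projE d N e = y).card : ℝ≥0∞) / (2 * (d + 1))

/-- `Pl` is the family of laws (indexed by the starting point) of simple random walk
on the cylinder `E = (ℤ/Nℤ)^d × ℤ`. -/
def IsCylRW (d N : ℕ) (Pl : Cyl d N → Measure (ℕ → Cyl d N)) : Prop :=
  (∀ x, IsProbabilityMeasure (Pl x)) ∧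
    ∀ (x : Cyl d N) (n : ℕ) (γ : ℕ → Cyl d N),
      Pl x {ω | ∀ i ≤ n, ω i = γ i} =
        (if γ 0 = x then 1 else 0) * ∏ i ∈ Finset.range n, stepProb d N (γ i) (γ (i + 1))

/-- The lattice `ℤ^ν`. -/
abbrev ZLat (ν : ℕ) := Fin ν → ℤ

/-- Unit vectors of `ℤ^ν`. -/
def zUnitVecs (ν : ℕ) : Set (ZLat ν) :=
  {v | ∃ i, v = Pi.single i 1 ∨ v = Pi.single i (-1)}

/-- One-step transition probability of simple random walk on `ℤ^ν`. -/
noncomputable def zStep (ν : ℕ) (x y : ZLat ν) : ℝ≥0∞ :=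
  if y - x ∈ zUnitVecs ν then (2 * ν : ℝ≥0∞)⁻¹ else 0

/-- `Ql` is the family of laws of simple random walk on `ℤ^ν`. -/
def IsLatRW (ν : ℕ) (Ql : ZLat ν → Measure (ℕ → ZLat ν)) : Prop :=
  (∀ x, IsProbabilityMeasure (Ql x)) ∧
    ∀ (x : ZLat ν) (n : ℕ) (γ : ℕ → ZLat ν),
      Ql x {ω | ∀ i ≤ n, ω i = γ i} =
        (if γ 0 = x then 1 else 0) * ∏ i ∈ Finset.range n, zStep ν (γ i) (γ (i + 1))

/-- `q(ν)`: the return probability to the origin of simple random walk on `ℤ^ν`. -/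
noncomputable def retProb (ν : ℕ) (Ql : ZLat ν → Measure (ℕ → ZLat ν)) : ℝ :=
  ((Ql 0) {ω | ∃ n : ℕ, 1 ≤ n ∧ ω n = 0}).toReal

/-- Entrance time `H_U` (with value `⊤` if `U` is never entered). -/
noncomputable def entT {X : Type*} (U : Set X) (ω : ℕ → X) : ℕ∞ :=
  sInf {t : ℕ∞ | ∃ n : ℕ, ω n ∈ U ∧ t = n}

/-- Exit time `T_U`. -/
noncomputable def exitT {X : Type*} (U : Set X) (ω : ℕ → X) : ℕ∞ :=
  entT Uᶜ ω

/-- `after t f ω = t + f (θ_t ω)`, with value `⊤` when `t = ⊤`. -/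
noncomputable def after {X : Type*} (t : ℕ∞) (f : (ℕ → X) → ℕ∞) (ω : ℕ → X) : ℕ∞ :=
  t.recTopCoe ⊤ fun m => (m : ℕ∞) + f fun k => ω (k + m)

/-- The block `C_j = (ℤ/Nℤ)^d × ([(j-3/4)N, (j+3/4)N] ∩ ℤ)`. -/
def Cblk (d N : ℕ) (j : ℤ) : Set (Cyl d N) :=
  {x | ((j : ℝ) - 3 / 4) * N ≤ (x.2 : ℝ) ∧ (x.2 : ℝ) ≤ ((j : ℝ) + 3 / 4) * N}

/-- The block `B_j = (ℤ/Nℤ)^d × [(j-1)N, (j+1)N]`. -/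
def Bblk (d N : ℕ) (j : ℤ) : Set (Cyl d N) :=
  {x | (j - 1) * (N : ℤ) ≤ x.2 ∧ x.2 ≤ (j + 1) * (N : ℤ)}

/-- The block `B̃_j = (ℤ/Nℤ)^d × [(j-2)N+1, (j+2)N-1]`. -/
def Btl (d N : ℕ) (j : ℤ) : Set (Cyl d N) :=
  {x | (j - 2) * (N : ℤ) + 1 ≤ x.2 ∧ x.2 ≤ (j + 2) * (N : ℤ) - 1}

/-- `D^j_1`: time of the first departure from `B̃_j` after the first return to `B_j`. -/
noncomputable def oneExc (d N : ℕ) (j : ℤ) (ω : ℕ → Cyl d N) : ℕ∞ :=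
  after (entT (Bblk d N j) ω) (exitT (Btl d N j)) ω

/-- `D^j_k`: time of the `k`-th departure from `B̃_j` (after successive returns to `B_j`). -/
noncomputable def DD (d N : ℕ) (j : ℤ) : ℕ → (ℕ → Cyl d N) → ℕ∞
  | 0, _ => 0
  | k + 1, ω => after (DD d N j k ω) (oneExc d N j) ω

/-- The law `P` of the walk with initial distribution uniform on `B_0`. -/
noncomputable def lawP (d N : ℕ) (Pl : Cyl d N → Measure (ℕ → Cyl d N)) :
    Measure (ℕ → Cyl d N) :=
  ((N : ℝ≥0∞) ^ d * (2 * N + 1))⁻¹ •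
    Measure.sum fun x : Cyl d N => if x ∈ Bblk d N 0 then Pl x else 0

/-- Nearest-neighbour adjacency on the cylinder. -/
def adj (d N : ℕ) (x y : Cyl d N) : Prop :=
  x ≠ y ∧ ∃ e ∈ unitVecs d, y = x + projE d N e

/-- `x` and `y` are connected by a nearest-neighbour path inside `S`. -/
def connIn (d N : ℕ) (S : Set (Cyl d N)) (x y : Cyl d N) : Prop :=
  Relation.ReflTransGen (fun a b => a ∈ S ∧ b ∈ S ∧ adj d N a b) x y

/-- `S` is a connected set. -/
def IsConnIn (d N : ℕ) (S : Set (Cyl d N)) : Prop :=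
  ∀ x ∈ S, ∀ y ∈ S, connIn d N S x y

/-- The boundary `∂U`. -/
def bdry (d N : ℕ) (U : Set (Cyl d N)) : Set (Cyl d N) :=
  {x | x ∉ U ∧ ∃ y ∈ U, adj d N x y}

/-- `ℓ^∞`-norm on `ℤ^{d+1}`. -/
def linf {d : ℕ} (v : Lat d) : ℕ := Finset.univ.sup fun i => (v i).natAbs

/-- `ℓ^∞`-distance induced on the cylinder. -/
noncomputable def cylDist (d N : ℕ) (x y : Cyl d N) : ℕ :=
  sInf {r : ℕ | ∃ v : Lat d, projE d N v = y - x ∧ linf v = r}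

/-- `S` has `ℓ^∞`-diameter at least `L`. -/
def diamGE (d N : ℕ) (S : Set (Cyl d N)) (L : ℕ) : Prop :=
  ∃ x ∈ S, ∃ y ∈ S, L ≤ cylDist d N x y

/-- `X_{[0,n]}`: the set of points visited up to time `n`. -/
def ran {X : Type*} (ω : ℕ → X) (n : ℕ) : Set X := {y | ∃ i ≤ n, ω i = y}

/-- The set of points visited up to the (possibly infinite) time `t`. -/
def ranE {X : Type*} (ω : ℕ → X) (t : ℕ∞) : Set X :=
  {y | ∃ i : ℕ, (i : ℕ∞) ≤ t ∧ ω i = y}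

/-- `L_m`: projections to `E` of `m`-dimensional affine coordinate lattices of `ℤ^{d+1}`. -/
def Lcoll (d N m : ℕ) : Set (Set (Cyl d N)) :=
  {F | ∃ I : Finset (Fin (d + 1)), I.card = m ∧ ∃ y : Lat d,
      F = (fun v => projE d N (y + v)) '' {v : Lat d | ∀ i ∉ I, v i = 0}}

/-- `A^j_m`: nonempty subsets of `C_j` contained in some `F ∈ L_m`. -/
def Adm (d N : ℕ) (j : ℤ) (m : ℕ) : Set (Finset (Cyl d N)) :=
  {A | A.Nonempty ∧ ↑A ⊆ Cblk d N j ∧ ∃ F ∈ Lcoll d N m, (↑A : Set (Cyl d N)) ⊆ F}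

/-- The segment `{x + k·e : 0 ≤ k ≤ L}` (addition via `π_E`). -/
def segment (d N : ℕ) (x : Cyl d N) (e : Lat d) (L : ℕ) : Set (Cyl d N) :=
  {y | ∃ k : ℕ, k ≤ L ∧ y = x + projE d N ((k : ℤ) • e)}

/-- The event `V_{K,j,t}` (with `k = ⌊t⌋` excursions). -/
def Vev (d N : ℕ) (K : ℝ) (j : ℤ) (k : ℕ) : Set (ℕ → Cyl d N) :=
  {ω | ∀ x ∈ Cblk d N j, ∀ e ∈ unitVecs d, ∃ i : ℕ, (i : ℝ) < Real.sqrt N ∧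
      ∀ l : ℕ, i ≤ l → l ≤ i + ⌊K * Real.log N⌋₊ →
        x + projE d N ((l : ℤ) • e) ∉ ranE ω (DD d N j k ω)}

/-- The event `U_{K,j,t}` (with `k = ⌊t⌋` excursions). -/
def Uev (d N : ℕ) (K : ℝ) (j : ℤ) (k : ℕ) : Set (ℕ → Cyl d N) :=
  {ω | ∀ F ∈ Lcoll d N 2, ∀ n : ℕ, (n : ℕ∞) ≤ DD d N j k ω →
      ∀ O₁ O₂ : Set (Cyl d N),
        O₁ ⊆ (F ∩ Cblk d N j) \ ran ω n → O₂ ⊆ (F ∩ Cblk d N j) \ ran ω n →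
        IsConnIn d N O₁ → IsConnIn d N O₂ →
        diamGE d N O₁ ⌊K * Real.log N⌋₊ → diamGE d N O₂ ⌊K * Real.log N⌋₊ →
        ∀ p ∈ O₁, ∀ q ∈ O₂, connIn d N ((F ∩ Cblk d N j) \ ran ω n) p q}

/-- A (finite) set `S` disconnects the cylinder. -/
def Disconnects (d N : ℕ) (S : Set (Cyl d N)) : Prop :=
  S.Finite ∧ ∃ M₀ : ℕ, ∀ M : ℕ, M₀ ≤ M → ∀ x y : Cyl d N,
    (M : ℤ) ≤ x.2 → y.2 ≤ -(M : ℤ) → ¬ connIn d N Sᶜ x y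

/-- The disconnection time `T_N`. -/
noncomputable def discT (d N : ℕ) (ω : ℕ → Cyl d N) : ℕ∞ :=
  sInf {t : ℕ∞ | ∃ n : ℕ, Disconnects d N (ran ω n) ∧ t = n}

/-- `r ≤ t` for `t : ℕ∞` and a real threshold `r` (trivially true when `t = ⊤`). -/
def geReal (t : ℕ∞) (r : ℝ) : Prop := ∀ n : ℕ, t = (n : ℕ∞) → r ≤ n

/-- `r < t` for `t : ℕ∞` and a real threshold `r` (trivially true when `t = ⊤`). -/
def gtReal (t : ℕ∞) (r : ℝ) : Prop := ∀ n : ℕ, t = (n : ℕ∞) → r < n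

/-- `φ_j(z) = E_z[exp(λ Σ_{x∈A} 1{H_x < T_{B̃_j}})]`. -/
noncomputable def phi (d N : ℕ) (Pl : Cyl d N → Measure (ℕ → Cyl d N)) (j : ℤ) (lam : ℝ)
    (A : Finset (Cyl d N)) (z : Cyl d N) : ℝ :=
  ∫ ω, Real.exp (lam * ∑ x ∈ A, if entT {x} ω < exitT (Btl d N j) ω then (1 : ℝ) else 0)
    ∂(Pl z)

/-- `‖φ_j‖_∞`. -/
noncomputable def phiSup (d N : ℕ) (Pl : Cyl d N → Measure (ℕ → Cyl d N)) (j : ℤ) (lam : ℝ)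
    (A : Finset (Cyl d N)) : ℝ :=
  ⨆ z : Cyl d N, phi d N Pl j lam A z

/-- `q_N = sup {P_z[H_F < T_{B̃_j}] : F ∈ L_m, z ∈ ∂F}`. -/
noncomputable def qNval (d N m : ℕ) (Pl : Cyl d N → Measure (ℕ → Cyl d N)) (j : ℤ) : ℝ :=
  sSup {r : ℝ | ∃ F ∈ Lcoll d N m, ∃ z ∈ bdry d N F,
      r = ((Pl z) {ω | entT F ω < exitT (Btl d N j) ω}).toReal}

/-- The times `τ_k`: `τ_0` is the entrance time of `(ℤ/Nℤ)^d × Nℤ`, and `τ_{k+1}` is the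
first time after `τ_k` at which the vertical component has moved by exactly `N`. -/
noncomputable def tauT (d N : ℕ) : ℕ → (ℕ → Cyl d N) → ℕ∞
  | 0, ω => entT {x : Cyl d N | (N : ℤ) ∣ x.2} ω
  | k + 1, ω =>
      (tauT d N k ω).recTopCoe ⊤ fun m =>
        sInf {t : ℕ∞ | ∃ n : ℕ, m < n ∧ ((ω n).2 - (ω m).2).natAbs = N ∧ t = n}

/-- `*`-adjacency on `ℤ²`. -/
def starAdj (x y : ℤ × ℤ) : Prop :=
  x ≠ y ∧ (x.1 - y.1).natAbs ≤ 1 ∧ (x.2 - y.2).natAbs ≤ 1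

/-!
Write `ρ v = |v|² + a` on `ℤ^{d+1}`. For `p = (1 - d) / 2` and `a` large, `ρ ^ p` is superharmonic
for simple random walk: it mimics the Green function `|v|^{1-d}`. Subtracting the tangent of
`ρ ↦ ρ ^ p` at `ρ = r²` and truncating there gives a nonnegative function supported in the ball of
radius `r`, still bounded below at the origin, which is superharmonic up to an error of order
`r^{-(d+1)}`. With `r` a small multiple of `N` it can be transplanted to the cylinder around any
point `x`, and the error is compensated by `N^{-(d+1)}` times a concave quadratic function of the
height. On `B̃_j` the height ranges over an interval of length of order `N`, so the resulting
superharmonic function is of order `N² · N^{-(d+1)} = N^{-(d-1)}` at every starting point `z`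
outside the support. The maximum principle bounds the probability of hitting `x` before leaving
`B̃_j` by this quantity, and a union bound over `x ∈ A` concludes.
-/

section RealPowers

variable {p b α β R ρ : ℝ}

/-- The symmetrised power `(1 + x) ^ p + (1 - x) ^ p`, which appears when `ρ ↦ ρ ^ p` is summed
over two opposite neighbours. -/
noncomputable def symmRpow (p x : ℝ) : ℝ := (1 + x) ^ p + (1 - x) ^ p

lemma symmRpow_neg (p x : ℝ) : symmRpow p (-x) = symmRpow p x := by
  rw [symmRpow, symmRpow, sub_neg_eq_add, ← sub_eq_add_neg, add_comm]

lemma add_rpow_add_sub_rpow {σ t : ℝ} (hσ : 0 < σ) (ht : |t / σ| ≤ 1) :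
    (σ + t) ^ p + (σ - t) ^ p = σ ^ p * symmRpow p (t / σ) := by
  obtain ⟨hl, hu⟩ := abs_le.1 ht
  rw [symmRpow, mul_add, ← Real.mul_rpow hσ.le (by linarith), ← Real.mul_rpow hσ.le (by linarith),
    mul_add, mul_sub, mul_one, mul_div_cancel₀ _ hσ.ne']

lemma hasDerivAt_one_add_rpow {x : ℝ} (hx : 0 < 1 + x) :
    HasDerivAt (fun y : ℝ ↦ (1 + y) ^ p) (p * (1 + x) ^ (p - 1)) x := by
  simpa using ((hasDerivAt_id x).const_add 1).rpow_const (p := p) (Or.inl hx.ne')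

lemma hasDerivAt_one_sub_rpow {x : ℝ} (hx : 0 < 1 - x) :
    HasDerivAt (fun y : ℝ ↦ (1 - y) ^ p) (-(p * (1 - x) ^ (p - 1))) x := by
  simpa using ((hasDerivAt_id x).const_sub 1).rpow_const (p := p) (Or.inl hx.ne')

lemma hasDerivAt_symmRpow {x : ℝ} (hadd : 0 < 1 + x) (hsub : 0 < 1 - x) :
    HasDerivAt (symmRpow p) (p * ((1 + x) ^ (p - 1) - (1 - x) ^ (p - 1))) x :=
  ((hasDerivAt_one_add_rpow hadd).add (hasDerivAt_one_sub_rpow hsub)).congr_deriv (by ring)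

lemma hasDerivAt_deriv_symmRpow {x : ℝ} (hadd : 0 < 1 + x) (hsub : 0 < 1 - x) :
    HasDerivAt (fun y ↦ p * ((1 + y) ^ (p - 1) - (1 - y) ^ (p - 1)))
      (p * (p - 1) * symmRpow (p - 2) x) x := by
  refine (((hasDerivAt_one_add_rpow hadd).sub
    (hasDerivAt_one_sub_rpow hsub)).const_mul p).congr_deriv ?_
  rw [symmRpow, show p - 1 - 1 = p - 2 by ring]
  ring

lemma apply_zero_le_of_convexOn_of_even {g : ℝ → ℝ} (hg : ConvexOn ℝ (Set.Icc (-b) b) g)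
    (heven : g.Even) {x : ℝ} (hx : |x| ≤ b) : g 0 ≤ g x := by
  have hmid := hg.2 (abs_le.1 hx) (abs_le.1 ((abs_neg x).trans_le hx))
    (show (0 : ℝ) ≤ 1 / 2 by norm_num) (show (0 : ℝ) ≤ 1 / 2 by norm_num) (by norm_num)
  simp only [smul_eq_mul, heven x, mul_neg, add_neg_cancel] at hmid
  linarith

lemma symmRpow_le_of_symmRpow_sub_two_le (hp : p ≤ 0) (hb : b < 1)
    (h : ∀ x, |x| ≤ b → symmRpow (p - 2) x ≤ α + β * x ^ 2) {x : ℝ} (hx : |x| ≤ b) :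
    symmRpow p x ≤ 2 + p * (p - 1) * (α / 2 * x ^ 2 + β / 12 * x ^ 4) := by
  set g : ℝ → ℝ := fun y ↦ p * (p - 1) * (α / 2 * y ^ 2 + β / 12 * y ^ 4) - symmRpow p y with hg
  have hpos {y : ℝ} (hy : y ∈ Set.Icc (-b) b) : 0 < 1 + y ∧ 0 < 1 - y :=
    ⟨by linarith [hy.1], by linarith [hy.2]⟩
  have hderiv {y : ℝ} (hy : y ∈ Set.Icc (-b) b) : HasDerivAt g
      (p * (p - 1) * (α * y + β / 3 * y ^ 3) - p * ((1 + y) ^ (p - 1) - (1 - y) ^ (p - 1))) y := by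
    have hpoly := (((hasDerivAt_pow 2 y).const_mul (α / 2)).add
      ((hasDerivAt_pow 4 y).const_mul (β / 12))).const_mul (p * (p - 1))
    refine (hpoly.sub (hasDerivAt_symmRpow (hpos hy).1 (hpos hy).2)).congr_deriv ?_
    push_cast
    ring
  have hderiv2 {y : ℝ} (hy : y ∈ Set.Icc (-b) b) : HasDerivAt
      (fun z ↦ p * (p - 1) * (α * z + β / 3 * z ^ 3) - p * ((1 + z) ^ (p - 1) - (1 - z) ^ (p - 1)))
      (p * (p - 1) * (α + β * y ^ 2 - symmRpow (p - 2) y)) y := by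
    have hpoly := (((hasDerivAt_id y).const_mul α).add
      ((hasDerivAt_pow 3 y).const_mul (β / 3))).const_mul (p * (p - 1))
    refine (hpoly.sub (hasDerivAt_deriv_symmRpow (hpos hy).1 (hpos hy).2)).congr_deriv ?_
    push_cast
    ring
  have hconv : ConvexOn ℝ (Set.Icc (-b) b) g := by
    refine convexOn_of_hasDerivWithinAt2_nonneg (convex_Icc _ _)
      (fun y hy ↦ (hderiv hy).continuousAt.continuousWithinAt)
      (fun y hy ↦ (hderiv (interior_subset hy)).hasDerivWithinAt)
      (fun y hy ↦ (hderiv2 (interior_subset hy)).hasDerivWithinAt) fun y hy ↦ ?_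
    have := h y (abs_le.2 (Set.mem_Icc.1 (interior_subset hy)))
    exact mul_nonneg (mul_nonneg_of_nonpos_of_nonpos hp (by linarith)) (by linarith)
  have heven : g.Even := fun y ↦ by
    simp only [hg, symmRpow_neg, even_two.neg_pow, (show Even 4 by decide).neg_pow]
  have hmin := apply_zero_le_of_convexOn_of_even hconv heven hx
  norm_num [hg, symmRpow] at hmin ⊢
  linarith

lemma exists_symmRpow_le_quadratic (hp : p ≤ 0) (hb : b < 1) :
    ∃ K, 0 ≤ K ∧ ∀ x, |x| ≤ b → symmRpow p x ≤ 2 + K * x ^ 2 := by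
  have hb' : 0 < 1 - b := by linarith
  have hp' : 0 ≤ p * (p - 1) := mul_nonneg_of_nonpos_of_nonpos hp (by linarith)
  refine ⟨p * (p - 1) * (1 - b) ^ (p - 2), by positivity, fun x hx ↦ ?_⟩
  have hbound : ∀ y, |y| ≤ b → symmRpow (p - 2) y ≤ 2 * (1 - b) ^ (p - 2) + 0 * y ^ 2 := by
    intro y hy
    obtain ⟨hl, hu⟩ := abs_le.1 hy
    have hplus := Real.rpow_le_rpow_of_nonpos hb' (show 1 - b ≤ 1 + y by linarith)
      (show p - 2 ≤ 0 by linarith)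
    have hminus := Real.rpow_le_rpow_of_nonpos hb' (show 1 - b ≤ 1 - y by linarith)
      (show p - 2 ≤ 0 by linarith)
    rw [symmRpow]
    linarith
  linarith [symmRpow_le_of_symmRpow_sub_two_le hp hb hbound hx]

lemma exists_symmRpow_le_quartic (hp : p ≤ 0) (hb : b < 1) :
    ∃ K, 0 ≤ K ∧ ∀ x, |x| ≤ b → symmRpow p x ≤ 2 + p * (p - 1) * x ^ 2 + K * x ^ 4 := by
  obtain ⟨K, hK, hquad⟩ := exists_symmRpow_le_quadratic (p := p - 2) (by linarith) hb
  have hp' : 0 ≤ p * (p - 1) := mul_nonneg_of_nonpos_of_nonpos hp (by linarith)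
  refine ⟨p * (p - 1) * (K / 12), by positivity, fun x hx ↦ ?_⟩
  linarith [symmRpow_le_of_symmRpow_sub_two_le hp hb hquad hx]

lemma one_add_mul_le_rpow_one_add_of_nonpos {x : ℝ} (hp : p ≤ 0) (hx : -1 < x) :
    1 + p * x ≤ (1 + x) ^ p := by
  have hx' : 0 < 1 + x := by linarith
  have hlog : p * x ≤ p * Real.log (1 + x) :=
    mul_le_mul_of_nonpos_left (by linarith [Real.log_le_sub_one_of_pos hx']) hp
  calc 1 + p * x ≤ Real.log (1 + x) * p + 1 := by linarith
    _ ≤ Real.exp (Real.log (1 + x) * p) := Real.add_one_le_exp _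
    _ = (1 + x) ^ p := (Real.rpow_def_of_pos hx' p).symm

/-- The constant `a` absorbs the quartic term: that term is at most `16 K / σ ^ 2`, and the
right-hand side has `2 n (-p) a / σ ^ 2` to spare. -/
lemma quadratic_add_quartic_le {n K a r σ : ℝ} (hp : p < 0) (hpn : 2 * (1 - p) ≤ n) (hK : 0 ≤ K)
    (hKa : 8 * K ≤ n * -p * a) (hr : 0 ≤ r) (ha : 0 ≤ a) (hσ : σ = r + a + 1) :
    p * (p - 1) * (4 / σ ^ 2 * r) + K * (16 / σ ^ 4 * r ^ 2) ≤ 2 * n * (-p / σ) := by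
  have hσpos : 0 < σ := by linarith
  have hquad : p * (p - 1) * (4 * r) ≤ 2 * n * -p * r := by
    have : 0 ≤ -p * r := mul_nonneg (by linarith) hr
    nlinarith
  have hquart : K * (16 / σ ^ 4 * r ^ 2) ≤ 16 * K / σ ^ 2 := by
    calc K * (16 / σ ^ 4 * r ^ 2) ≤ K * (16 / σ ^ 4 * σ ^ 2) := by gcongr; linarith
      _ = 16 * K / σ ^ 2 := by field_simp
  calc p * (p - 1) * (4 / σ ^ 2 * r) + K * (16 / σ ^ 4 * r ^ 2)
      ≤ p * (p - 1) * (4 / σ ^ 2 * r) + 16 * K / σ ^ 2 := by gcongr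
    _ = (p * (p - 1) * (4 * r) + 16 * K) / σ ^ 2 := by ring
    _ ≤ 2 * n * -p * σ / σ ^ 2 := by
        gcongr
        have : 0 ≤ n * -p := mul_nonneg (by linarith) (by linarith)
        nlinarith
    _ = 2 * n * (-p / σ) := by field_simp

lemma abs_two_mul_div_le_half {a r t : ℝ} (ha : 4 ≤ a) (ht : t ^ 2 ≤ r) :
    |2 * t / (r + a + 1)| ≤ 1 / 2 := by
  have hσ : 0 < r + a + 1 := by nlinarith
  rw [abs_div, abs_of_pos hσ, div_le_iff₀ hσ, abs_le]
  constructor <;> nlinarith [sq_nonneg (t - 2), sq_nonneg (t + 2)]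

lemma add_rpow_add_sub_rpow_le {K r σ t : ℝ} (hK : 0 ≤ K) (hσ : 0 < σ)
    (hsymm : ∀ x, |x| ≤ 1 / 2 → symmRpow p x ≤ 2 + p * (p - 1) * x ^ 2 + K * x ^ 4)
    (hhalf : |2 * t / σ| ≤ 1 / 2) (ht : t ^ 2 ≤ r) :
    (σ + 2 * t) ^ p + (σ - 2 * t) ^ p
      ≤ σ ^ p * (2 + p * (p - 1) * (4 / σ ^ 2 * t ^ 2) + K * (16 / σ ^ 4 * (r * t ^ 2))) := by
  rw [add_rpow_add_sub_rpow hσ (hhalf.trans (by norm_num))]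
  gcongr
  calc symmRpow p (2 * t / σ)
      ≤ 2 + p * (p - 1) * (2 * t / σ) ^ 2 + K * (2 * t / σ) ^ 4 := hsymm _ hhalf
    _ = 2 + p * (p - 1) * (4 / σ ^ 2 * t ^ 2) + K * (16 / σ ^ 4 * (t ^ 2 * t ^ 2)) := by ring
    _ ≤ _ := by gcongr

lemma sum_add_rpow_add_sub_rpow_le {ι : Type*} [Fintype ι] {K a r σ : ℝ} (hK : 0 ≤ K)
    (hsymm : ∀ x, |x| ≤ 1 / 2 → symmRpow p x ≤ 2 + p * (p - 1) * x ^ 2 + K * x ^ 4) (ha : 4 ≤ a)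
    (v : ι → ℝ) (hr : r = ∑ i, v i ^ 2) (hσ : σ = r + a + 1) :
    ∑ i, ((σ + 2 * v i) ^ p + (σ - 2 * v i) ^ p) ≤ σ ^ p *
      (2 * Fintype.card ι + (p * (p - 1) * (4 / σ ^ 2 * r) + K * (16 / σ ^ 4 * r ^ 2))) := by
  have hvr (i : ι) : v i ^ 2 ≤ r := hr ▸
    Finset.single_le_sum (f := fun i ↦ v i ^ 2) (fun i _ ↦ sq_nonneg _) (Finset.mem_univ i)
  have hr0 : 0 ≤ r := hr ▸ Finset.sum_nonneg fun i _ ↦ sq_nonneg (v i)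
  calc _ ≤ ∑ i, σ ^ p *
        (2 + p * (p - 1) * (4 / σ ^ 2 * v i ^ 2) + K * (16 / σ ^ 4 * (r * v i ^ 2))) :=
        Finset.sum_le_sum fun i _ ↦ add_rpow_add_sub_rpow_le hK (by linarith) hsymm
          (hσ ▸ abs_two_mul_div_le_half ha (hvr i)) (hvr i)
    _ = _ := by
        simp only [← Finset.mul_sum, Finset.sum_add_distrib, Finset.sum_const, Finset.card_univ,
          nsmul_eq_mul, ← hr]
        ring

theorem exists_sum_rpow_le {ι : Type*} [Fintype ι] (hp : p < 0)
    (hpι : 2 * (1 - p) ≤ Fintype.card ι) :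
    ∃ a : ℝ, 4 ≤ a ∧ ∀ (v : ι → ℝ) (ρ : ℝ), ρ = ∑ i, v i ^ 2 + a →
      ∑ i, ((ρ + 1 + 2 * v i) ^ p + (ρ + 1 - 2 * v i) ^ p) ≤ 2 * Fintype.card ι * ρ ^ p := by
  obtain ⟨K, hK, hsymm⟩ := exists_symmRpow_le_quartic hp.le (b := 1 / 2) (by norm_num)
  set n : ℝ := (Fintype.card ι : ℝ)
  have hnp : 0 < n * -p := mul_pos (by linarith) (by linarith)
  refine ⟨4 + 8 * K / (n * -p), le_add_of_nonneg_right (by positivity), fun v ρ hρ ↦ ?_⟩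
  set a := 4 + 8 * K / (n * -p) with ha
  have ha4 : 4 ≤ a := le_add_of_nonneg_right (by positivity)
  have hKa : 8 * K ≤ n * -p * a := by
    rw [ha, mul_add, mul_div_cancel₀ _ hnp.ne']
    linarith
  set r := ∑ i, v i ^ 2
  have hr : 0 ≤ r := Finset.sum_nonneg fun i _ ↦ sq_nonneg _
  obtain ⟨σ, hσ⟩ : ∃ σ, σ = ρ + 1 := ⟨_, rfl⟩
  have hσr : σ = r + a + 1 := by rw [hσ, hρ]
  have hσpos : 0 < σ := by linarith
  have hσinv : 1 / σ < 1 := by rw [div_lt_one hσpos]; linarith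
  rw [← hσ]
  calc _ ≤ σ ^ p * (2 * n + (p * (p - 1) * (4 / σ ^ 2 * r) + K * (16 / σ ^ 4 * r ^ 2))) :=
        sum_add_rpow_add_sub_rpow_le hK hsymm ha4 v rfl hσr
    _ ≤ σ ^ p * (2 * n + 2 * n * (-p / σ)) := by
        gcongr
        exact quadratic_add_quartic_le hp hpι hK hKa hr (by linarith) hσr
    _ = 2 * n * (σ ^ p * (1 + p * -(1 / σ))) := by ring
    _ ≤ 2 * n * (σ ^ p * (1 + -(1 / σ)) ^ p) := by
        gcongr
        exact one_add_mul_le_rpow_one_add_of_nonpos hp.le (by linarith)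
    _ = 2 * n * ρ ^ p := by
        rw [← Real.mul_rpow hσpos.le (by linarith)]
        congr 2
        field_simp
        linarith

/-- The gap between `ρ ^ p` and its tangent line at `ρ = R`. -/
noncomputable def rpowTangentGap (p R ρ : ℝ) : ℝ := ρ ^ p - R ^ p - p * R ^ (p - 1) * (ρ - R)

lemma rpowTangentGap_self (p R : ℝ) : rpowTangentGap p R R = 0 := by simp [rpowTangentGap]

lemma rpowTangentGap_eq_mul (hR : 0 < R) (hρ : 0 < ρ) :
    rpowTangentGap p R ρ = R ^ p * ((ρ / R) ^ p - 1 - p * (ρ / R - 1)) := by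
  rw [rpowTangentGap, Real.div_rpow hρ.le hR.le, Real.rpow_sub_one hR.ne']
  field_simp

lemma rpowTangentGap_nonneg (hp : p ≤ 0) (hR : 0 < R) (hρ : 0 < ρ) :
    0 ≤ rpowTangentGap p R ρ := by
  rw [rpowTangentGap_eq_mul hR hρ]
  have hu : 0 < ρ / R := by positivity
  have := one_add_mul_le_rpow_one_add_of_nonpos hp (x := ρ / R - 1) (by linarith)
  rw [add_sub_cancel] at this
  exact mul_nonneg (by positivity) (by linarith)

lemma exists_rpowTangentGap_le_sq (hp : p ≤ 0) :
    ∃ K, 0 ≤ K ∧ ∀ R ρ, 0 < R → R / 2 ≤ ρ → ρ ≤ R →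
      rpowTangentGap p R ρ ≤ K * R ^ (p - 2) * (R - ρ) ^ 2 := by
  obtain ⟨K, hK, hsymm⟩ := exists_symmRpow_le_quadratic hp (b := 1 / 2) (by norm_num)
  refine ⟨K, hK, fun R ρ hR hl hu ↦ ?_⟩
  set x := 1 - ρ / R with hx
  have hx0 : 0 ≤ x := sub_nonneg.2 ((div_le_one hR).2 hu)
  have hx2 : x ≤ 1 / 2 := by
    have : 1 / 2 ≤ ρ / R := by rw [le_div_iff₀ hR]; linarith
    linarith
  have htangent := one_add_mul_le_rpow_one_add_of_nonpos hp (show -1 < x by linarith)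
  have hquad := hsymm x (by rwa [abs_of_nonneg hx0])
  rw [symmRpow] at hquad
  calc rpowTangentGap p R ρ = R ^ p * ((1 - x) ^ p - 1 + p * x) := by
        rw [rpowTangentGap_eq_mul hR (by linarith), hx, sub_sub_cancel]
        ring
    _ ≤ R ^ p * (K * x ^ 2) := by gcongr; linarith
    _ = K * R ^ (p - 2) * (R - ρ) ^ 2 := by
        rw [Real.rpow_sub hR, Real.rpow_two, hx]
        field_simp

end RealPowers

section LatticePotential

variable {d : ℕ} {p a R : ℝ} {v e : Lat d}

lemma mem_unitVecs : e ∈ unitVecs d ↔ ∃ i, e = Pi.single i 1 ∨ e = Pi.single i (-1) := by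
  simp [unitVecs, @eq_comm _ e, or_comm]

lemma abs_apply_le_one_of_mem_unitVecs (he : e ∈ unitVecs d) (k : Fin (d + 1)) : |e k| ≤ 1 := by
  obtain ⟨i, rfl | rfl⟩ := mem_unitVecs.1 he <;> rw [Pi.single_apply] <;> split_ifs <;> simp

lemma sum_unitVecs {M : Type*} [AddCommMonoid M] (f : Lat d → M) :
    ∑ e ∈ unitVecs d, f e = ∑ i, (f (Pi.single i 1) + f (Pi.single i (-1))) := by
  rw [unitVecs, Finset.sum_image, Fintype.sum_prod_type]
  · simp
  · rintro ⟨i, b⟩ - ⟨k, c⟩ - h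
    have hik : i = k := by
      by_contra hne
      have := congrFun h i
      cases b <;> simp [hne] at this
    subst hik
    have := congrFun h i
    cases b <;> cases c <;> simp_all

lemma card_unitVecs (d : ℕ) : (unitVecs d).card = 2 * (d + 1) := by
  rw [Finset.card_eq_sum_ones, sum_unitVecs]
  simp [mul_comm]

lemma sum_unitVecs_const (c : ℝ) : ∑ _e ∈ unitVecs d, c = 2 * (d + 1) * c := by
  simp [card_unitVecs]

/-- The squared Euclidean norm on the lattice, shifted by `a` so that its negative powers are
finite at the origin. -/
noncomputable def normSqAdd (a : ℝ) (v : Lat d) : ℝ := ∑ i, (v i : ℝ) ^ 2 + a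

lemma normSqAdd_zero : normSqAdd a (0 : Lat d) = a := by simp [normSqAdd]

lemma le_normSqAdd (a : ℝ) (v : Lat d) : a ≤ normSqAdd a v :=
  le_add_of_nonneg_left (Finset.sum_nonneg fun _ _ ↦ sq_nonneg _)

lemma sq_add_le_normSqAdd (a : ℝ) (v : Lat d) (i : Fin (d + 1)) :
    (v i : ℝ) ^ 2 + a ≤ normSqAdd a v :=
  add_le_add_left (Finset.single_le_sum (f := fun i ↦ (v i : ℝ) ^ 2) (fun _ _ ↦ sq_nonneg _)
    (Finset.mem_univ i)) a

lemma normSqAdd_add_single (a : ℝ) (v : Lat d) (i : Fin (d + 1)) (s : ℤ) :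
    normSqAdd a (v + Pi.single i s) = normSqAdd a v + 2 * s * v i + (s : ℝ) ^ 2 := by
  have hne (k) (hk : k ∈ ({i}ᶜ : Finset (Fin (d + 1)))) :
      (((v + Pi.single i s : Lat d) k : ℤ) : ℝ) ^ 2 = (v k : ℝ) ^ 2 := by
    rw [Pi.add_apply, Pi.single_eq_of_ne (by simpa using hk), add_zero]
  rw [normSqAdd, normSqAdd, Fintype.sum_eq_add_sum_compl i, Fintype.sum_eq_add_sum_compl i,
    Finset.sum_congr rfl hne, Pi.add_apply, Pi.single_eq_same]
  push_cast
  ring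

lemma sum_normSqAdd_add (a : ℝ) (v : Lat d) :
    ∑ e ∈ unitVecs d, normSqAdd a (v + e) = 2 * (d + 1) * (normSqAdd a v + 1) := by
  have hpair (i : Fin (d + 1)) : normSqAdd a (v + Pi.single i 1)
      + normSqAdd a (v + Pi.single i (-1)) = 2 * (normSqAdd a v + 1) := by
    rw [normSqAdd_add_single, normSqAdd_add_single]
    push_cast
    ring
  simp only [sum_unitVecs, hpair, Finset.sum_const, Finset.card_univ, Fintype.card_fin,
    nsmul_eq_mul]
  push_cast
  ring

lemma exists_sum_normSqAdd_rpow_le (hp : p < 0) (hpd : 2 * (1 - p) ≤ d + 1) :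
    ∃ a : ℝ, 4 ≤ a ∧ ∀ v : Lat d,
      ∑ e ∈ unitVecs d, normSqAdd a (v + e) ^ p ≤ 2 * (d + 1) * normSqAdd a v ^ p := by
  obtain ⟨a, ha, hsum⟩ := exists_sum_rpow_le (ι := Fin (d + 1)) hp (by simpa using hpd)
  refine ⟨a, ha, fun v ↦ ?_⟩
  convert hsum (fun i ↦ (v i : ℝ)) (normSqAdd a v) rfl using 1
  · rw [sum_unitVecs]
    refine Finset.sum_congr rfl fun i _ ↦ ?_
    rw [normSqAdd_add_single, normSqAdd_add_single]
    congr 2 <;> push_cast <;> ring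
  · simp

lemma normSqAdd_le_sqrt_add_one_sq (ha : 0 ≤ a) (he : e ∈ unitVecs d) (v : Lat d) :
    normSqAdd a v ≤ (√(normSqAdd a (v + e)) + 1) ^ 2 := by
  have hw := le_normSqAdd a (v + e)
  have key (i : Fin (d + 1)) (s : ℤ) (hs : (s : ℝ) ^ 2 = 1) (he : e = Pi.single i s) :
      normSqAdd a v ≤ (√(normSqAdd a (v + e)) + 1) ^ 2 := by
    have hcoord : (s * (v i + s) : ℝ) ^ 2 ≤ normSqAdd a (v + e) := by
      have := sq_add_le_normSqAdd a (v + e) i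
      simp only [he, Pi.add_apply, Pi.single_eq_same, Int.cast_add] at this ⊢
      rw [mul_pow, hs]
      linarith
    have hexp := normSqAdd_add_single a v i s
    have habs := (abs_le.1 (Real.abs_le_sqrt hcoord)).1
    rw [← he] at hexp
    rw [add_sq, Real.sq_sqrt (by linarith)]
    nlinarith
  obtain ⟨i, he | he⟩ := mem_unitVecs.1 he
  · exact key i 1 (by norm_num) he
  · exact key i (-1) (by norm_num) he

/-- The potential `ρ ^ p` of the random walk, with `ρ = normSqAdd a`, made to vanish to first
order at `ρ = R` by subtracting its tangent and set to `0` beyond. -/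
noncomputable def truncPotential (a p R : ℝ) (v : Lat d) : ℝ :=
  rpowTangentGap p R (min (normSqAdd a v) R)

lemma truncPotential_of_le (h : normSqAdd a v ≤ R) :
    truncPotential a p R v = rpowTangentGap p R (normSqAdd a v) := by
  rw [truncPotential, min_eq_left h]

lemma truncPotential_of_ge (h : R ≤ normSqAdd a v) : truncPotential a p R v = 0 := by
  rw [truncPotential, min_eq_right h, rpowTangentGap_self]

lemma truncPotential_nonneg (hp : p ≤ 0) (ha : 0 < a) (hR : 0 < R) (v : Lat d) :
    0 ≤ truncPotential a p R v :=
  rpowTangentGap_nonneg hp hR (lt_min (ha.trans_le (le_normSqAdd a v)) hR)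

lemma truncPotential_le (hp : p ≤ 0) (ha : 0 < a) (hR : 0 < R) (v : Lat d) :
    truncPotential a p R v ≤ rpowTangentGap p R (normSqAdd a v) := by
  obtain h | h := le_total (normSqAdd a v) R
  · exact (truncPotential_of_le h).le
  · rw [truncPotential_of_ge h]
    exact rpowTangentGap_nonneg hp hR (ha.trans_le (le_normSqAdd a v))

lemma sum_truncPotential_le_of_le (hp : p ≤ 0) (ha : 0 < a) (hR : 0 < R)
    (hsuper : ∑ e ∈ unitVecs d, normSqAdd a (v + e) ^ p ≤ 2 * (d + 1) * normSqAdd a v ^ p)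
    (hv : normSqAdd a v ≤ R) :
    ∑ e ∈ unitVecs d, truncPotential a p R (v + e)
      ≤ 2 * (d + 1) * (truncPotential a p R v + -p * R ^ (p - 1)) :=
  calc _ ≤ ∑ e ∈ unitVecs d, rpowTangentGap p R (normSqAdd a (v + e)) :=
        Finset.sum_le_sum fun e _ ↦ truncPotential_le hp ha hR _
    _ = ∑ e ∈ unitVecs d, normSqAdd a (v + e) ^ p - 2 * (d + 1) * R ^ p
          - p * R ^ (p - 1) * (2 * (d + 1) * (normSqAdd a v + 1) - 2 * (d + 1) * R) := by
        simp only [rpowTangentGap, Finset.sum_sub_distrib, ← Finset.mul_sum, sum_unitVecs_const,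
          sum_normSqAdd_add]
    _ ≤ 2 * (d + 1) * normSqAdd a v ^ p - 2 * (d + 1) * R ^ p
          - p * R ^ (p - 1) * (2 * (d + 1) * (normSqAdd a v + 1) - 2 * (d + 1) * R) := by gcongr
    _ = _ := by
        rw [truncPotential_of_le hv, rpowTangentGap]
        ring

lemma truncPotential_add_le_of_ge {K : ℝ} (ha : 0 < a) (hR : 16 ≤ R) (hK : 0 ≤ K)
    (hgap : ∀ ρ, R / 2 ≤ ρ → ρ ≤ R → rpowTangentGap p R ρ ≤ K * R ^ (p - 2) * (R - ρ) ^ 2)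
    (hv : R ≤ normSqAdd a v) (he : e ∈ unitVecs d) :
    truncPotential a p R (v + e) ≤ 4 * K * R ^ (p - 1) := by
  obtain hw | hw := le_total R (normSqAdd a (v + e))
  · rw [truncPotential_of_ge hw]
    positivity
  set ρ := normSqAdd a (v + e)
  have hρ : 0 ≤ ρ := ha.le.trans (le_normSqAdd a _)
  have hclose : R - ρ ≤ 2 * √R := by
    have hR' : √R ≤ √ρ + 1 :=
      Real.sqrt_le_iff.2 ⟨by positivity, hv.trans (normSqAdd_le_sqrt_add_one_sq ha.le he v)⟩
    have := Real.sqrt_le_sqrt hw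
    nlinarith [Real.sq_sqrt hρ, Real.sq_sqrt (show 0 ≤ R by linarith), Real.sqrt_nonneg ρ]
  have hhalf : R / 2 ≤ ρ := by
    have : 4 ≤ √R := Real.le_sqrt_of_sq_le (by linarith)
    nlinarith [Real.sq_sqrt (show 0 ≤ R by linarith)]
  calc truncPotential a p R (v + e) ≤ K * R ^ (p - 2) * (R - ρ) ^ 2 := by
        rw [truncPotential_of_le hw]
        exact hgap ρ hhalf hw
    _ ≤ K * R ^ (p - 2) * (2 * √R) ^ 2 := by gcongr
    _ = 4 * K * R ^ (p - 2 + 1) := by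
        rw [Real.rpow_add_one (by linarith), mul_pow, Real.sq_sqrt (by linarith)]
        ring
    _ = 4 * K * R ^ (p - 1) := by ring_nf

lemma exists_sum_truncPotential_le (hp : p < 0) (hpd : 2 * (1 - p) ≤ d + 1) :
    ∃ a C : ℝ, 0 < a ∧ 0 < C ∧ ∀ R, 16 ≤ R → ∀ v : Lat d,
      ∑ e ∈ unitVecs d, truncPotential a p R (v + e)
        ≤ 2 * (d + 1) * (truncPotential a p R v + C * R ^ (p - 1)) := by
  obtain ⟨a, ha, hsuper⟩ := exists_sum_normSqAdd_rpow_le hp hpd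
  obtain ⟨K, hK, hgap⟩ := exists_rpowTangentGap_le_sq hp.le
  have ha' : 0 < a := by linarith
  refine ⟨a, -p + 4 * K, ha', by linarith, fun R hR v ↦ ?_⟩
  have hR' : 0 < R := by linarith
  obtain hv | hv := le_total (normSqAdd a v) R
  · refine (sum_truncPotential_le_of_le hp.le ha' hR' (hsuper v) hv).trans ?_
    gcongr
    linarith
  · calc _ ≤ ∑ _e ∈ unitVecs d, 4 * K * R ^ (p - 1) := Finset.sum_le_sum fun e he ↦
          truncPotential_add_le_of_ge ha' hR hK (fun ρ ↦ hgap R ρ hR') hv he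
      _ = 2 * (d + 1) * (0 + 4 * K * R ^ (p - 1)) := by rw [sum_unitVecs_const, zero_add]
      _ ≤ _ := by
          gcongr
          · exact truncPotential_nonneg hp.le ha' hR' v
          · linarith

lemma eventually_le_truncPotential_zero (hp : p < 0) (ha : 0 < a) :
    ∀ᶠ R in atTop, a ^ p / 2 ≤ truncPotential a p R (0 : Lat d) := by
  have hlim : Tendsto (fun R : ℝ ↦ R ^ p) atTop (nhds 0) := by
    simpa using tendsto_rpow_neg_atTop (neg_pos.2 hp)
  have hp1 : 0 < 1 - p := by linarith
  filter_upwards [hlim.eventually_le_const (show 0 < a ^ p / 2 / (1 - p) by positivity),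
    eventually_ge_atTop a] with R hR haR
  have hRpos : 0 < R := ha.trans_le haR
  have htangent : p * R ^ (p - 1) * (a - R) ≤ -p * R ^ p := by
    have : p * (R ^ (p - 1) * a) ≤ 0 := mul_nonpos_of_nonpos_of_nonneg hp.le (by positivity)
    have hmul : R ^ (p - 1) * R = R ^ p := by
      rw [← Real.rpow_add_one hRpos.ne', sub_add_cancel]
    linear_combination this - p * hmul
  rw [le_div_iff₀ hp1] at hR
  rw [truncPotential_of_le (normSqAdd_zero.trans_le haR), normSqAdd_zero, rpowTangentGap]
  linarith

/-- A nonnegative function on the lattice that is at least `c` at the origin, vanishes at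
sup-norm distance more than `r` from it, and whose average over the neighbours of a site exceeds
its value there by at most `ε`; it stands in for the Green function of the walk killed outside the
ball of radius `r`. -/
structure IsLocalPotential (d : ℕ) (r ε c : ℝ) (F : Lat d → ℝ) : Prop where
  nonneg : ∀ v, 0 ≤ F v
  le_apply_zero : c ≤ F 0
  eq_zero_of_lt : ∀ v i, r < |(v i : ℝ)| → F v = 0
  sum_le : ∀ v, ∑ e ∈ unitVecs d, F (v + e) ≤ 2 * (d + 1) * (F v + ε)

theorem exists_isLocalPotential (hd : 2 ≤ d) :
    ∃ C c : ℝ, 0 < C ∧ 0 < c ∧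
      ∀ᶠ r : ℝ in atTop, ∃ F, IsLocalPotential d r (C / r ^ (d + 1)) c F := by
  have hd' : (2 : ℝ) ≤ d := by exact_mod_cast hd
  obtain ⟨p, hp⟩ : ∃ p : ℝ, p = (1 - d) / 2 := ⟨_, rfl⟩
  have hp0 : p < 0 := by linarith
  obtain ⟨a, C, ha, hC, hsum⟩ := exists_sum_truncPotential_le hp0 (d := d) (by linarith)
  refine ⟨C, a ^ p / 2, hC, by positivity, ?_⟩
  have hsq : Tendsto (fun r : ℝ ↦ r ^ 2) atTop atTop := tendsto_pow_atTop two_ne_zero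
  filter_upwards [hsq.eventually (eventually_le_truncPotential_zero (d := d) hp0 ha),
    eventually_ge_atTop 4] with r h0 hr
  have hr0 : 0 < r := by linarith
  refine ⟨truncPotential a p (r ^ 2), truncPotential_nonneg hp0.le ha (by positivity), h0,
    fun v i hi ↦ truncPotential_of_ge ?_, fun v ↦ ?_⟩
  · have := sq_le_sq₀ hr0.le (abs_nonneg _) |>.2 hi.le
    rw [sq_abs] at this
    linarith [sq_add_le_normSqAdd a v i]
  · have hpow : (r ^ 2) ^ (p - 1) = (r ^ (d + 1))⁻¹ := by
      rw [← Real.rpow_natCast_mul hr0.le, ← Real.rpow_natCast, ← Real.rpow_neg hr0.le]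
      congr 1
      push_cast
      linarith
    rw [div_eq_mul_inv, ← hpow]
    exact hsum (r ^ 2) (by nlinarith) v

end LatticePotential

section MarkovChain

variable {X : Type*} {A B : Set X}

/-- The paths that hit `A` during the `k` time steps from `m` on, without leaving `B` in between
(in particular no path if `k = 0`). -/
def hitsWithin (A B : Set X) (m k : ℕ) : Set (ℕ → X) :=
  {ω | ∃ t < k, ω (m + t) ∈ A ∧ ∀ i ≤ t, ω (m + i) ∈ B}

lemma monotone_hitsWithin (A B : Set X) (m : ℕ) : Monotone (hitsWithin A B m) :=
  fun _ _ hkl _ ⟨t, ht, h⟩ ↦ ⟨t, ht.trans_le hkl, h⟩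

lemma hitsWithin_zero (A B : Set X) (m : ℕ) : hitsWithin A B m 0 = ∅ := by simp [hitsWithin]

lemma mem_of_mem_hitsWithin {m k : ℕ} {ω : ℕ → X} (h : ω ∈ hitsWithin A B m k) : ω m ∈ B := by
  obtain ⟨t, -, -, hB⟩ := h
  exact hB 0 (Nat.zero_le t)

lemma mem_hitsWithin_succ {m k : ℕ} {ω : ℕ → X} (hA : ω m ∉ A) (h : ω ∈ hitsWithin A B m (k + 1)) :
    ω ∈ hitsWithin A B (m + 1) k := by
  obtain ⟨_ | t, ht, htA, htB⟩ := h
  · exact absurd htA hA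
  · refine ⟨t, by omega, by rwa [Nat.add_right_comm], fun i hi ↦ ?_⟩
    rw [Nat.add_right_comm]
    exact htB (i + 1) (by omega)

lemma setOf_entT_lt_exitT (A B : Set X) :
    {ω | entT A ω < exitT B ω} = ⋃ k, hitsWithin A B 0 k := by
  ext ω
  simp only [Set.mem_ofPred_eq, Set.mem_iUnion, entT, exitT, hitsWithin, zero_add]
  constructor
  · intro h
    obtain ⟨_, ⟨n, hn, rfl⟩, hlt⟩ := sInf_lt_iff.1 h
    refine ⟨n + 1, n, n.lt_succ_self, hn, fun i hi ↦ ?_⟩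
    by_contra hB
    exact (hlt.trans_le (sInf_le ⟨i, hB, rfl⟩)).not_ge (by exact_mod_cast hi)
  · rintro ⟨-, n, -, hn, hB⟩
    have hentT : sInf {t : ℕ∞ | ∃ m : ℕ, ω m ∈ A ∧ t = m} ≤ n := sInf_le ⟨n, hn, rfl⟩
    have hexitT : ((n + 1 : ℕ) : ℕ∞) ≤ sInf {t : ℕ∞ | ∃ m : ℕ, ω m ∈ Bᶜ ∧ t = m} := by
      refine le_sInf ?_
      rintro _ ⟨m, hm, rfl⟩
      exact_mod_cast lt_of_not_ge fun hmn ↦ hm (hB m hmn)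
    exact (hentT.trans_lt (by exact_mod_cast n.lt_succ_self)).trans_le hexitT

lemma setOf_entT_lt_exitT_subset (A B : Set X) :
    {ω | entT A ω < exitT B ω} ⊆ ⋃ x ∈ A, {ω | entT {x} ω < exitT B ω} := by
  intro ω (hω : entT A ω < exitT B ω)
  obtain ⟨_, ⟨n, hn, rfl⟩, hlt⟩ := sInf_lt_iff.1 hω
  exact Set.mem_biUnion hn ((sInf_le ⟨n, rfl, rfl⟩ : entT {ω n} ω ≤ n).trans_lt hlt)

variable [MeasurableSpace X] {p : X → X → ℝ≥0∞} {x : X} {μ : Measure (ℕ → X)}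

/-- `μ` is the law of the Markov chain on `X` with transition probabilities `p` started at `x`,
in terms of finite-dimensional distributions; `PiNat.cylinder γ (n + 1)` consists of the paths that
agree with `γ` at the times `0, …, n`. -/
def IsChainLaw (p : X → X → ℝ≥0∞) (x : X) (μ : Measure (ℕ → X)) : Prop :=
  ∀ (n : ℕ) (γ : ℕ → X), μ (PiNat.cylinder (E := fun _ ↦ X) γ (n + 1)) =
    (if γ 0 = x then 1 else 0) * ∏ i ∈ Finset.range n, p (γ i) (γ (i + 1))

lemma IsChainLaw.measure_cylinder_one (h : IsChainLaw p x μ) (γ : ℕ → X) :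
    μ (PiNat.cylinder (E := fun _ ↦ X) γ 1) = if γ 0 = x then 1 else 0 := by
  simpa using h 0 γ

lemma IsChainLaw.measure_cylinder_update (h : IsChainLaw p x μ) (γ : ℕ → X) (m : ℕ) (y : X) :
    μ (PiNat.cylinder (E := fun _ ↦ X) (Function.update γ (m + 1) y) (m + 2)) =
      μ (PiNat.cylinder (E := fun _ ↦ X) γ (m + 1)) * p (γ m) y := by
  rw [h, h, Finset.prod_range_succ, mul_assoc, Function.update_self,
    Function.update_of_ne (by omega), Function.update_of_ne (by omega)]
  congr 2
  refine Finset.prod_congr rfl fun i hi ↦ ?_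
  have := Finset.mem_range.1 hi
  rw [Function.update_of_ne (by omega), Function.update_of_ne (by omega)]

variable [Countable X] {h : X → ℝ≥0∞} {c : ℝ≥0∞}

lemma IsChainLaw.mul_measure_cylinder_inter_hitsWithin_le (hμ : IsChainLaw p x μ)
    (hc : ∀ y ∈ A ∩ B, c ≤ h y) (hsuper : ∀ y ∈ B, ∑' w, p y w * h w ≤ h y) (k m : ℕ)
    (γ : ℕ → X) :
    c * μ (PiNat.cylinder (E := fun _ ↦ X) γ (m + 1) ∩ hitsWithin A B m k) ≤
      μ (PiNat.cylinder (E := fun _ ↦ X) γ (m + 1)) * h (γ m) := by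
  induction k generalizing m γ with
  | zero => simp [hitsWithin_zero]
  | succ k ih =>
    set S := PiNat.cylinder (E := fun _ ↦ X) γ (m + 1)
    have hval {ω : ℕ → X} (hω : ω ∈ S) : ω m = γ m := hω m m.lt_succ_self
    by_cases hB : γ m ∈ B
    swap
    · have hempty : S ∩ hitsWithin A B m (k + 1) = ∅ := Set.eq_empty_of_forall_notMem
        fun ω hω ↦ hB (hval hω.1 ▸ mem_of_mem_hitsWithin hω.2)
      simp [hempty]
    by_cases hA : γ m ∈ A
    · rw [mul_comm]
      exact mul_le_mul' (measure_mono Set.inter_subset_left) (hc _ ⟨hA, hB⟩)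
    let S' (y : X) := PiNat.cylinder (E := fun _ ↦ X) (Function.update γ (m + 1) y) (m + 2)
    have hsub : S ∩ hitsWithin A B m (k + 1) ⊆ ⋃ y, S' y ∩ hitsWithin A B (m + 1) k := by
      rw [← Set.iUnion_inter, show ⋃ y, S' y = S from PiNat.iUnion_cylinder_update γ (m + 1)]
      exact fun ω hω ↦ ⟨hω.1, mem_hitsWithin_succ (hval hω.1 ▸ hA) hω.2⟩
    calc c * μ (S ∩ hitsWithin A B m (k + 1))
        ≤ c * ∑' y, μ (S' y ∩ hitsWithin A B (m + 1) k) := by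
          gcongr
          exact (measure_mono hsub).trans (measure_iUnion_le _)
      _ = ∑' y, c * μ (S' y ∩ hitsWithin A B (m + 1) k) := ENNReal.tsum_mul_left.symm
      _ ≤ ∑' y, μ S * (p (γ m) y * h y) := ENNReal.tsum_le_tsum fun y ↦ by
          have := ih (m + 1) (Function.update γ (m + 1) y)
          rwa [hμ.measure_cylinder_update, Function.update_self, mul_assoc] at this
      _ = μ S * ∑' y, p (γ m) y * h y := ENNReal.tsum_mul_left
      _ ≤ μ S * h (γ m) := by gcongr; exact hsuper _ hB

theorem IsChainLaw.mul_measure_entT_lt_exitT_le (hμ : IsChainLaw p x μ)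
    (hc : ∀ y ∈ A ∩ B, c ≤ h y) (hsuper : ∀ y ∈ B, ∑' w, p y w * h w ≤ h y) :
    c * μ {ω | entT A ω < exitT B ω} ≤ h x := by
  rw [setOf_entT_lt_exitT, (monotone_hitsWithin A B 0).measure_iUnion, ENNReal.mul_iSup]
  refine iSup_le fun k ↦ ?_
  let S (y : X) := PiNat.cylinder (E := fun _ ↦ X) (fun _ ↦ y) 1
  have hsub : hitsWithin A B 0 k ⊆ ⋃ y, S y ∩ hitsWithin A B 0 k := fun ω hω ↦
    Set.mem_iUnion.2 ⟨ω 0, fun i hi ↦ by rw [Nat.lt_one_iff.1 hi], hω⟩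
  calc c * μ (hitsWithin A B 0 k) ≤ c * ∑' y, μ (S y ∩ hitsWithin A B 0 k) := by
        gcongr
        exact (measure_mono hsub).trans (measure_iUnion_le _)
    _ = ∑' y, c * μ (S y ∩ hitsWithin A B 0 k) := ENNReal.tsum_mul_left.symm
    _ ≤ ∑' y, μ (S y) * h y := ENNReal.tsum_le_tsum fun y ↦
        hμ.mul_measure_cylinder_inter_hitsWithin_le hc hsuper k 0 fun _ ↦ y
    _ = ∑' y, if y = x then h y else 0 := by simp [S, hμ.measure_cylinder_one]
    _ = h x := tsum_ite_eq x h

end MarkovChain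

section CylinderWalk

variable {d N : ℕ} {Pl : Cyl d N → Measure (ℕ → Cyl d N)}

lemma IsCylRW.isChainLaw (hP : IsCylRW d N Pl) (z : Cyl d N) :
    IsChainLaw (stepProb d N) z (Pl z) := by
  intro n γ
  convert hP.2 z n γ using 2
  · ext ω
    simp [PiNat.mem_cylinder_iff]
  · congr

lemma tsum_stepProb_mul (x : Cyl d N) (h : Cyl d N → ℝ≥0∞) :
    ∑' y, stepProb d N x y * h y =
      (∑ e ∈ unitVecs d, h (x + projE d N e)) / (2 * (d + 1)) := by
  have hstep (y : Cyl d N) : stepProb d N x y * h y =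
      ∑ e ∈ unitVecs d, if y = x + projE d N e then h y / (2 * (d + 1)) else 0 := by
    simp only [stepProb, Finset.card_filter, Nat.cast_sum, ENNReal.div_eq_inv_mul, Finset.mul_sum,
      Finset.sum_mul]
    refine Finset.sum_congr rfl fun e _ ↦ ?_
    by_cases he : x + projE d N e = y <;> simp [he, @eq_comm _ y]
  simp only [hstep]
  rw [Summable.tsum_finsetSum fun _ _ ↦ ENNReal.summable]
  simp only [tsum_ite_eq, ENNReal.div_eq_inv_mul, Finset.mul_sum]

lemma IsCylRW.mul_measureReal_entT_lt_exitT_le (hP : IsCylRW d N Pl) {A B : Set (Cyl d N)}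
    {b : Cyl d N → ℝ} {c : ℝ} {z : Cyl d N} (hc : 0 ≤ c)
    (hnonneg : ∀ y ∈ B, ∀ e ∈ unitVecs d, 0 ≤ b (y + projE d N e))
    (hsuper : ∀ y ∈ B, ∑ e ∈ unitVecs d, b (y + projE d N e) ≤ 2 * (d + 1) * b y)
    (hA : ∀ y ∈ A ∩ B, c ≤ b y) :
    c * (Pl z).real {ω | entT A ω < exitT B ω} ≤ max (b z) 0 := by
  have hmax : ENNReal.ofReal c * Pl z {ω | entT A ω < exitT B ω} ≤ ENNReal.ofReal (b z) := by
    refine (hP.isChainLaw z).mul_measure_entT_lt_exitT_le (h := fun y ↦ ENNReal.ofReal (b y))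
      (fun y hy ↦ ENNReal.ofReal_le_ofReal (hA y hy)) fun y hy ↦ ?_
    have hdeg : (2 * (d + 1) : ℝ≥0∞) = ENNReal.ofReal (2 * (d + 1)) := by
      rw [ENNReal.ofReal_mul (by norm_num), ENNReal.ofReal_add (by positivity) (by norm_num)]
      simp
    rw [tsum_stepProb_mul, ← ENNReal.ofReal_sum_of_nonneg (hnonneg y hy), hdeg,
      ← ENNReal.ofReal_div_of_pos (by positivity)]
    exact ENNReal.ofReal_le_ofReal ((div_le_iff₀' (by positivity)).2 (hsuper y hy))
  simpa [Measure.real, hc, ENNReal.toReal_ofReal'] using ENNReal.toReal_mono (by simp) hmax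

lemma sum_add_projE_snd_sub_sq (y : Cyl d N) (t : ℝ) :
    ∑ e ∈ unitVecs d, (((y + projE d N e).2 : ℝ) - t) ^ 2
      = 2 * (d + 1) * ((y.2 : ℝ) - t) ^ 2 + 2 := by
  simp only [sum_unitVecs, Fin.sum_univ_castSucc, projE, Prod.snd_add, Pi.single_eq_same,
    Pi.single_eq_of_ne (Fin.castSucc_lt_last _).ne', Finset.sum_const, Finset.card_univ,
    Fintype.card_fin, nsmul_eq_mul]
  push_cast
  ring

/-- The representative in `ℤ^{d+1}` of `y - x` whose coordinates along the torus are minimal in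
absolute value. -/
def cylLift (x y : Cyl d N) : Lat d :=
  Fin.snoc (α := fun _ ↦ ℤ) (fun i ↦ (y.1 i - x.1 i).valMinAbs) (y.2 - x.2)

lemma cylLift_last (x y : Cyl d N) : cylLift x y (Fin.last d) = y.2 - x.2 := by
  simp [cylLift]

lemma cylLift_castSucc (x y : Cyl d N) (i : Fin d) :
    cylLift x y i.castSucc = (y.1 i - x.1 i).valMinAbs := by
  simp [cylLift]

lemma cylLift_self (x : Cyl d N) : cylLift x x = 0 := by
  ext k
  refine Fin.lastCases ?_ (fun i ↦ ?_) k <;> simp [cylLift_last, cylLift_castSucc]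

lemma cylLift_add_projE {x y : Cyl d N} {e : Lat d} (he : e ∈ unitVecs d)
    (h : ∀ k, 2 * |cylLift x (y + projE d N e) k| + 2 < N) :
    cylLift x (y + projE d N e) = cylLift x y + e := by
  have : NeZero N := ⟨by have := h 0; have := abs_nonneg (cylLift x (y + projE d N e) 0); omega⟩
  rw [← sub_eq_iff_eq_add]
  ext k
  induction k using Fin.lastCases with
  | last =>
    simp only [Pi.sub_apply, cylLift_last, projE, Prod.snd_add]
    ring
  | cast k =>
    have hk := h k.castSucc
    obtain ⟨hwl, hwu⟩ := abs_le.1 (le_refl |cylLift x (y + projE d N e) k.castSucc|)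
    obtain ⟨hel, heu⟩ := abs_le.1 (abs_apply_le_one_of_mem_unitVecs he k.castSucc)
    rw [cylLift_castSucc x y, eq_comm, ZMod.valMinAbs_spec, Pi.sub_apply]
    refine ⟨?_, by rw [Set.mem_Ioc]; omega⟩
    rw [Int.cast_sub, cylLift_castSucc, ZMod.coe_valMinAbs]
    simp only [projE, Prod.fst_add, Pi.add_apply]
    ring

variable {r ε c : ℝ} {F : Lat d → ℝ}

lemma IsLocalPotential.apply_cylLift_add_projE_le (hF : IsLocalPotential d r ε c F)
    (hr : 2 * (r + 1) < N) {e : Lat d} (he : e ∈ unitVecs d) (x y : Cyl d N) :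
    F (cylLift x (y + projE d N e)) ≤ F (cylLift x y + e) := by
  by_cases h : ∀ k, |(cylLift x (y + projE d N e) k : ℝ)| ≤ r
  · refine (congrArg F (cylLift_add_projE he fun k ↦ ?_)).le
    have : 2 * |(cylLift x (y + projE d N e) k : ℝ)| + 2 < N := by linarith [h k]
    exact_mod_cast this
  · push Not at h
    obtain ⟨k, hk⟩ := h
    rw [hF.eq_zero_of_lt _ k hk]
    exact hF.nonneg _

/-- The potential of the point `x`, corrected by a multiple of the concave function
`(2N)^2 - (height - jN)^2` so as to become superharmonic on `B̃_j`. -/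
noncomputable def cylBarrier (F : Lat d → ℝ) (ε : ℝ) (j : ℤ) (x y : Cyl d N) : ℝ :=
  F (cylLift x y) + (d + 1) * ε * ((2 * N) ^ 2 - ((y.2 : ℝ) - j * N) ^ 2)

lemma apply_cylLift_le_cylBarrier (F : Lat d → ℝ) (hε : 0 ≤ ε) {j : ℤ}
    (x : Cyl d N) {y : Cyl d N} (hy : |(y.2 : ℝ) - j * N| ≤ 2 * N) :
    F (cylLift x y) ≤ cylBarrier F ε j x y := by
  have := sq_le_sq.2 (hy.trans (le_abs_self _))
  exact le_add_of_nonneg_right (mul_nonneg (by positivity) (by linarith))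

lemma IsLocalPotential.sum_cylBarrier_le (hF : IsLocalPotential d r ε c F) (hr : 2 * (r + 1) < N)
    (j : ℤ) (x y : Cyl d N) :
    ∑ e ∈ unitVecs d, cylBarrier F ε j x (y + projE d N e)
      ≤ 2 * (d + 1) * cylBarrier F ε j x y := by
  have hpot : ∑ e ∈ unitVecs d, F (cylLift x (y + projE d N e))
      ≤ 2 * (d + 1) * (F (cylLift x y) + ε) :=
    (Finset.sum_le_sum fun e he ↦ hF.apply_cylLift_add_projE_le hr he x y).trans (hF.sum_le _)
  simp only [cylBarrier, Finset.sum_add_distrib, ← Finset.mul_sum, Finset.sum_sub_distrib,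
    sum_unitVecs_const, sum_add_projE_snd_sub_sq]
  linear_combination hpot

lemma abs_snd_sub_le_of_mem_Btl {j : ℤ} {y : Cyl d N} (hy : y ∈ Btl d N j) :
    |(y.2 : ℝ) - j * N| ≤ 2 * N - 1 := by
  have h : |y.2 - j * N| ≤ 2 * N - 1 := abs_le.2 ⟨by linarith [hy.1], by linarith [hy.2]⟩
  exact_mod_cast h

lemma abs_snd_add_projE_sub_le_of_mem_Btl {j : ℤ} {y : Cyl d N} (hy : y ∈ Btl d N j) {e : Lat d}
    (he : e ∈ unitVecs d) : |((y + projE d N e).2 : ℝ) - j * N| ≤ 2 * N := by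
  have hstep : |(e (Fin.last d) : ℝ)| ≤ 1 := by
    exact_mod_cast abs_apply_le_one_of_mem_unitVecs he (Fin.last d)
  calc |((y + projE d N e).2 : ℝ) - j * N| = |((y.2 : ℝ) - j * N) + e (Fin.last d)| := by
        rw [Prod.snd_add, projE]
        push_cast
        ring_nf
    _ ≤ |(y.2 : ℝ) - j * N| + |(e (Fin.last d) : ℝ)| := abs_add_le _ _
    _ ≤ 2 * N := by linarith [abs_snd_sub_le_of_mem_Btl hy]

lemma IsLocalPotential.mul_measureReal_entT_lt_exitT_le (hF : IsLocalPotential d r ε c F)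
    (hr : 2 * (r + 1) < N) (hc : 0 ≤ c) (hε : 0 ≤ ε) (hP : IsCylRW d N Pl) {j : ℤ}
    {x z : Cyl d N} (hxz : r < |(z.2 : ℝ) - x.2|) :
    c * (Pl z).real {ω | entT {x} ω < exitT (Btl d N j) ω} ≤ (d + 1) * ε * (2 * N) ^ 2 := by
  refine (hP.mul_measureReal_entT_lt_exitT_le (b := cylBarrier F ε j x) hc
    (fun y hy e he ↦ (hF.nonneg _).trans (apply_cylLift_le_cylBarrier F hε x
      (abs_snd_add_projE_sub_le_of_mem_Btl hy he)))
    (fun y _ ↦ hF.sum_cylBarrier_le hr j x y) ?_).trans (max_le ?_ (by positivity))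
  · rintro y ⟨rfl, hy⟩
    calc c ≤ F (cylLift y y) := by simpa only [cylLift_self] using hF.le_apply_zero
      _ ≤ cylBarrier F ε j y y :=
        apply_cylLift_le_cylBarrier F hε y (by linarith [abs_snd_sub_le_of_mem_Btl hy])
  · have hFz : F (cylLift x z) = 0 := hF.eq_zero_of_lt _ (Fin.last d) <| by
      rw [cylLift_last]
      exact_mod_cast hxz
    rw [cylBarrier, hFz, zero_add]
    gcongr
    linarith [sq_nonneg ((z.2 : ℝ) - j * N)]

lemma exists_eventually_measureReal_entT_singleton_lt_exitT_le (hd : 2 ≤ d) {δ : ℝ} (hδ : 0 < δ) :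
    ∃ K : ℝ, 0 < K ∧ ∀ᶠ N : ℕ in atTop,
      ∀ Pl : Cyl d N → Measure (ℕ → Cyl d N), IsCylRW d N Pl →
      ∀ (j : ℤ) (x z : Cyl d N), δ * N ≤ |(z.2 : ℝ) - x.2| →
        (Pl z).real {ω | entT {x} ω < exitT (Btl d N j) ω} ≤ K / (N : ℝ) ^ (d - 1) := by
  obtain ⟨C, c, hC, hc, hpot⟩ := exists_isLocalPotential hd
  obtain ⟨η, hη, hηδ, hη4⟩ : ∃ η : ℝ, 0 < η ∧ η < δ ∧ η ≤ 1 / 4 :=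
    ⟨min (δ / 2) (1 / 4), by positivity, (min_le_left _ _).trans_lt (half_lt_self hδ),
      min_le_right _ _⟩
  refine ⟨4 * (d + 1) * C / (η ^ (d + 1) * c), by positivity, ?_⟩
  have hscale : Tendsto (fun N : ℕ ↦ η * N) atTop atTop :=
    tendsto_natCast_atTop_atTop.const_mul_atTop hη
  filter_upwards [hscale.eventually hpot, eventually_gt_atTop 4] with N ⟨F, hF⟩ hN Pl hP j x z hxz
  have hN4 : (4 : ℝ) < N := by exact_mod_cast hN
  have hNpos : (0 : ℝ) < N := by linarith
  have hhit := hF.mul_measureReal_entT_lt_exitT_le (by nlinarith) hc.le (by positivity) hP (j := j)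
    (((mul_lt_mul_iff_left₀ hNpos).2 hηδ).trans_le hxz)
  refine ((le_div_iff₀' hc).2 hhit).trans_eq ?_
  have hpow : (N : ℝ) ^ (d + 1) = (N : ℝ) ^ (d - 1) * N ^ 2 := by
    rw [← pow_add, show d - 1 + 2 = d + 1 by omega]
  rw [mul_pow, hpow]
  field_simp
  ring

theorem exists_measureReal_entT_singleton_lt_exitT_le (d : ℕ) {δ : ℝ} (hδ : 0 < δ) :
    ∃ c : ℝ, 0 < c ∧ ∀ N : ℕ, 1 ≤ N →
      ∀ Pl : Cyl d N → Measure (ℕ → Cyl d N), IsCylRW d N Pl →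
      ∀ (j : ℤ) (x z : Cyl d N), δ * N ≤ |(z.2 : ℝ) - x.2| →
        (Pl z).real {ω | entT {x} ω < exitT (Btl d N j) ω} ≤ c / (N : ℝ) ^ (d - 1) := by
  have hle_one {N : ℕ} {Pl : Cyl d N → Measure (ℕ → Cyl d N)} (hP : IsCylRW d N Pl) (z : Cyl d N)
      (S : Set (ℕ → Cyl d N)) : (Pl z).real S ≤ 1 :=
    have := hP.1 z
    measureReal_le_one
  obtain hd | hd := le_or_gt d 1
  · refine ⟨1, one_pos, fun N _ Pl hP j x z _ ↦ ?_⟩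
    rw [Nat.sub_eq_zero_of_le hd, pow_zero, div_one]
    exact hle_one hP _ _
  obtain ⟨K, hK, hlarge⟩ := exists_eventually_measureReal_entT_singleton_lt_exitT_le hd hδ
  obtain ⟨N₀, hN₀⟩ := eventually_atTop.1 hlarge
  refine ⟨max K ((N₀ : ℝ) ^ (d - 1)), by positivity, fun N hN Pl hP j x z hxz ↦ ?_⟩
  have : (0 : ℝ) < N := by exact_mod_cast hN
  obtain h | h := le_total N₀ N
  · exact (hN₀ N h Pl hP j x z hxz).trans (by gcongr; exact le_max_left _ _)
  · refine (hle_one hP _ _).trans ((one_le_div (by positivity)).2 (le_max_of_le_right ?_))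
    gcongr

lemma quarter_mul_le_abs_snd_sub {j : ℤ} {x z : Cyl d N} (hx : x ∈ Cblk d N j)
    (hz : z.2 = (j - 1) * (N : ℤ) ∨ z.2 = (j + 1) * (N : ℤ)) :
    1 / 4 * (N : ℝ) ≤ |(z.2 : ℝ) - x.2| := by
  obtain ⟨hl, hu⟩ := hx
  obtain h | h := hz <;> rw [h, le_abs] <;> push_cast
  · exact Or.inr (by linarith)
  · exact Or.inl (by linarith)

theorem statement_14_general (d : ℕ) {δ : ℝ} (hδ : 0 < δ) :
    ∃ c : ℝ, 0 < c ∧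
      ∀ N : ℕ, 1 ≤ N → ∀ Pl : Cyl d N → Measure (ℕ → Cyl d N), IsCylRW d N Pl →
      ∀ (j : ℤ) (A : Finset (Cyl d N)) (z : Cyl d N), (∀ x ∈ A, δ * N ≤ |(z.2 : ℝ) - x.2|) →
        ((Pl z) {ω | entT (↑A : Set (Cyl d N)) ω < exitT (Btl d N j) ω}).toReal
          ≤ c * A.card / (N : ℝ) ^ (d - 1) := by
  obtain ⟨c, hc, hpoint⟩ := exists_measureReal_entT_singleton_lt_exitT_le d hδ
  refine ⟨c, hc, fun N hN Pl hP j A z hA ↦ ?_⟩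
  have := hP.1 z
  calc (Pl z).real {ω | entT (↑A : Set (Cyl d N)) ω < exitT (Btl d N j) ω}
      ≤ (Pl z).real (⋃ x ∈ A, {ω | entT {x} ω < exitT (Btl d N j) ω}) :=
        measureReal_mono (setOf_entT_lt_exitT_subset _ _) (measure_ne_top _ _)
    _ ≤ ∑ x ∈ A, (Pl z).real {ω | entT {x} ω < exitT (Btl d N j) ω} :=
        measureReal_biUnion_finset_le _ _
    _ ≤ ∑ _x ∈ A, c / (N : ℝ) ^ (d - 1) :=
        Finset.sum_le_sum fun x hx ↦ hpoint N hN Pl hP j x z (hA x hx)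
    _ = c * A.card / (N : ℝ) ^ (d - 1) := by
        rw [Finset.sum_const, nsmul_eq_mul]
        ring

end CylinderWalk

/-- **(1.18).** For `d ≥ 3` there is a constant `c` depending only on `d` such that for
all `N ≥ 2`, all `j ∈ ℤ`, every nonempty `A ⊆ C_j` and every
`z ∈ (ℤ/Nℤ)^d × {(j-1)N, (j+1)N}`, `P_z[H_A < T_{B̃_j}] ≤ c |A| / N^{d-1}`. -/
theorem statement_14 (d : ℕ) (hd : 3 ≤ d) :
    ∃ c : ℝ, 0 < c ∧
      ∀ N : ℕ, 2 ≤ N → ∀ Pl : Cyl d N → Measure (ℕ → Cyl d N), IsCylRW d N Pl →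
      ∀ j : ℤ, ∀ A : Finset (Cyl d N), A.Nonempty → (↑A : Set (Cyl d N)) ⊆ Cblk d N j →
      ∀ z : Cyl d N, (z.2 = (j - 1) * (N : ℤ) ∨ z.2 = (j + 1) * (N : ℤ)) →
        ((Pl z) {ω | entT (↑A : Set (Cyl d N)) ω < exitT (Btl d N j) ω}).toReal
          ≤ c * A.card / (N : ℝ) ^ (d - 1) := by
  obtain ⟨c, hc, hgen⟩ := statement_14_general d (show (0 : ℝ) < 1 / 4 by norm_num)
  exact ⟨c, hc, fun N hN Pl hP j A _ hA z hz ↦ hgen N (by omega) Pl hP j A z fun x hx ↦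
    quarter_mul_le_abs_snd_sub (hA hx) hz⟩

end DiscCyl
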